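/- Let A be a Noetherian commutative ring and I ⊆ A an ideal. If f : P → Q is a quasi-isomorphism between bounded-above cochain complexes of flat A-modules, then the induced map Λ_I P → Λ_I Q between the degreewise I-adic completions is again a quasi-isomorphism. -/

import Mathlib

open CategoryTheory

/-- The `I`-adic completion functor on the category of `A`-modules. Applied degreewise
(via `Functor.mapHomologicalComplex`) it computes the degreewise `I`-adic completion of a
cochain complex of `A`-modules. -/
noncomputable def adicCompletionFunctor (A : Type) [CommRing A] (I : Ideal A) :
    ModuleCat A ⥤ ModuleCat A where
  obj M := ModuleCat.of A (AdicCompletion I M)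
  map f := ModuleCat.ofHom ((AdicCompletion.map I f.hom).restrictScalars A)
  map_id M := ModuleCat.hom_ext
    (congrArg (LinearMap.restrictScalars A) (AdicCompletion.map_id I M))
  map_comp f g := ModuleCat.hom_ext
    (congrArg (LinearMap.restrictScalars A) (AdicCompletion.map_comp I f.hom g.hom).symm)

noncomputable instance (A : Type) [CommRing A] (I : Ideal A) :
    (adicCompletionFunctor A I).PreservesZeroMorphisms where
  map_zero M N := ModuleCat.hom_ext
    (congrArg (LinearMap.restrictScalars A) (AdicCompletion.map_zero I))

/-!
A quasi-isomorphism is a map with acyclic mapping cone, and additive functors commute with mapping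
cones, so it suffices to show that degreewise completion preserves acyclicity of a bounded-above
complex of flat modules. In such a complex all boundary modules are flat, by descending induction
from the bound. The complex is therefore spliced from short exact sequences `0 → K → M → N → 0`
with `N` flat; these satisfy `K ∩ J M = J K` for every ideal `J`, so the `I`-adic topology of `M`
induces that of `K` and completion keeps the sequences exact. Thus flatness plays here the role that
the Artin–Rees lemma plays for finitely generated modules.
-/

section Modules

variable {A : Type*} [CommRing A] {K M N : Type*} [AddCommGroup K] [Module A K]
  [AddCommGroup M] [Module A M] [AddCommGroup N] [Module A N]
  {f : K →ₗ[A] M} {g : M →ₗ[A] N}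

theorem flat_left_of_exact [Module.Flat A M] [Module.Flat A N] (hf : Function.Injective f)
    (hfg : Function.Exact f g) (hg : Function.Surjective g) : Module.Flat A K := by
  rw [Module.Flat.iff_rTensor_injective']
  intro J
  have hfJ : Function.Injective (f.lTensor J) :=
    LinearMap.lTensor_injective_of_exact_of_flat g hg f hf hfg J
  have hJM : Function.Injective (J.subtype.rTensor M) :=
    Module.Flat.rTensor_preserves_injective_linearMap _ J.injective_subtype
  have hsquare : f.lTensor A ∘ₗ J.subtype.rTensor K = J.subtype.rTensor M ∘ₗ f.lTensor J := by
    rw [LinearMap.lTensor_comp_rTensor, LinearMap.rTensor_comp_lTensor]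
  have hcomp := hJM.comp hfJ
  rw [← LinearMap.coe_comp, ← hsquare, LinearMap.coe_comp] at hcomp
  exact hcomp.of_comp

theorem flat_prod [Module.Flat A M] [Module.Flat A N] : Module.Flat A (M × N) := by
  rw [Module.Flat.iff_rTensor_injective']
  intro J
  have hinj : Function.Injective ((J.subtype.rTensor M).prodMap (J.subtype.rTensor N)) :=
    Function.Injective.prodMap
      (Module.Flat.rTensor_preserves_injective_linearMap _ J.injective_subtype)
      (Module.Flat.rTensor_preserves_injective_linearMap _ J.injective_subtype)
  have hsquare : (TensorProduct.prodRight A A A M N).toLinearMap ∘ₗ J.subtype.rTensor (M × N) =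
      (J.subtype.rTensor M).prodMap (J.subtype.rTensor N) ∘ₗ
        (TensorProduct.prodRight A A J M N).toLinearMap := by
    ext <;> simp
  have hcomp := hinj.comp (TensorProduct.prodRight A A J M N).injective
  rw [← LinearEquiv.coe_coe, ← LinearMap.coe_comp, ← hsquare, LinearMap.coe_comp] at hcomp
  exact hcomp.of_comp

theorem comap_smul_top_of_exact_of_flat [Module.Flat A N] (hf : Function.Injective f)
    (hfg : Function.Exact f g) (hg : Function.Surjective g) (J : Ideal A) :
    (J • ⊤ : Submodule A M).comap f = J • ⊤ := by
  apply Submodule.map_injective_of_injective hf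
  rw [Submodule.map_comap_eq, Submodule.map_smul'', Submodule.map_top, ← hfg.linearMap_ker_eq,
    g.ker_inf_smul_top_eq_smul_of_flat J hg]

theorem exists_sub_mem_smul_top_of_exact (hfg : Function.Exact f g) (hg : Function.Surjective g)
    {J : Ideal A} {m : M} (hm : g m ∈ (J • ⊤ : Submodule A N)) :
    ∃ k, f k - m ∈ (J • ⊤ : Submodule A M) := by
  rw [← Submodule.mem_comap, Submodule.comap_smul_top_of_surjective J g hg,
    hfg.linearMap_ker_eq] at hm
  obtain ⟨m', hm', _, ⟨k, rfl⟩, rfl⟩ := Submodule.mem_sup.mp hm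
  exact ⟨k, by simpa using hm'⟩

theorem adicCompletion_map_mk_eq_zero_iff (I : Ideal A)
    (a : AdicCompletion.AdicCauchySequence I M) :
    AdicCompletion.map I g (AdicCompletion.mk I M a) = 0 ↔
      ∀ n, g (a n) ∈ (I ^ n • ⊤ : Submodule A N) := by
  simp [AdicCompletion.ext_iff]

theorem adicCompletion_map_injective_of_exact_of_flat [Module.Flat A N] (I : Ideal A)
    (hf : Function.Injective f) (hfg : Function.Exact f g) (hg : Function.Surjective g) :
    Function.Injective (AdicCompletion.map I f) := by
  rw [injective_iff_map_eq_zero]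
  intro x hx
  obtain ⟨a, rfl⟩ := AdicCompletion.mk_surjective I K x
  rw [adicCompletion_map_mk_eq_zero_iff] at hx
  have ha (n : ℕ) : a n ∈ (I ^ n • ⊤ : Submodule A K) := by
    rw [← comap_smul_top_of_exact_of_flat hf hfg hg]
    exact hx n
  ext n
  simpa using ha n

theorem adicCompletion_map_exact_of_exact_of_flat [Module.Flat A N] (I : Ideal A)
    (hf : Function.Injective f) (hfg : Function.Exact f g) (hg : Function.Surjective g) :
    Function.Exact (AdicCompletion.map I f) (AdicCompletion.map I g) := by
  refine LinearMap.exact_of_comp_eq_zero_of_ker_le_range ?_ fun x hx ↦ ?_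
  · rw [AdicCompletion.map_comp, hfg.linearMap_comp_eq_zero, AdicCompletion.map_zero]
  obtain ⟨a, rfl⟩ := AdicCompletion.mk_surjective I M x
  rw [LinearMap.mem_ker, adicCompletion_map_mk_eq_zero_iff] at hx
  have happrox (n : ℕ) : ∃ k, f k ≡ a n [SMOD (I ^ n • ⊤ : Submodule A M)] := by
    simpa only [SModEq.sub_mem] using exists_sub_mem_smul_top_of_exact hfg hg (hx n)
  choose k hk using happrox
  have hcauchy (n : ℕ) : k n ≡ k (n + 1) [SMOD (I ^ n • ⊤ : Submodule A K)] := by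
    have hfk : f (k n) ≡ f (k (n + 1)) [SMOD (I ^ n • ⊤ : Submodule A M)] :=
      (hk n).trans <| (a.property n.le_succ).trans <|
        ((hk (n + 1)).mono (Submodule.smul_mono_left (Ideal.pow_le_pow_right n.le_succ))).symm
    rwa [SModEq.sub_mem, ← comap_smul_top_of_exact_of_flat hf hfg hg, Submodule.mem_comap, map_sub,
      ← SModEq.sub_mem]
  exact ⟨AdicCompletion.mk I K (.mk I K k hcauchy), AdicCompletion.ext hk⟩

theorem adicCompletion_map_exact_of_flat_range {L P : Type*} [AddCommGroup L] [Module A L]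
    [AddCommGroup P] [Module A P] (I : Ideal A) {d₁ : L →ₗ[A] M} {d₂ : M →ₗ[A] N}
    {d₃ : N →ₗ[A] P} (h₁₂ : Function.Exact d₁ d₂) (h₂₃ : Function.Exact d₂ d₃)
    [Module.Flat A d₂.range] [Module.Flat A d₃.range] :
    Function.Exact (AdicCompletion.map I d₁) (AdicCompletion.map I d₂) := by
  have hM : Function.Exact d₁.range.subtype d₂.rangeRestrict := by
    rw [LinearMap.exact_iff, LinearMap.ker_rangeRestrict, Submodule.range_subtype,
      h₁₂.linearMap_ker_eq]
  have hN : Function.Exact d₂.range.subtype d₃.rangeRestrict := by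
    rw [LinearMap.exact_iff, LinearMap.ker_rangeRestrict, Submodule.range_subtype,
      h₂₃.linearMap_ker_eq]
  have hinj : Function.Injective (AdicCompletion.map I d₂.range.subtype) :=
    adicCompletion_map_injective_of_exact_of_flat I d₂.range.injective_subtype hN
      d₃.surjective_rangeRestrict
  have hsurj : Function.Surjective (AdicCompletion.map I d₁.rangeRestrict) :=
    AdicCompletion.map_surjective I d₁.surjective_rangeRestrict
  have hd₁ : d₁.range.subtype ∘ₗ d₁.rangeRestrict = d₁ := d₁.subtype_comp_codRestrict _ _
  have hd₂ : d₂.range.subtype ∘ₗ d₂.rangeRestrict = d₂ := d₂.subtype_comp_codRestrict _ _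
  rw [← hd₁, ← hd₂, ← AdicCompletion.map_comp, ← AdicCompletion.map_comp,
    hsurj.comp_exact_iff_exact, hinj.comp_exact_iff_exact]
  exact adicCompletion_map_exact_of_exact_of_flat I d₁.range.injective_subtype hM
    d₂.surjective_rangeRestrict

end Modules

section Complexes

theorem quasiIso_iff_acyclic_mappingCone {C : Type*} [Category* C] [Abelian C]
    {P Q : CochainComplex C ℤ} (f : P ⟶ Q) :
    QuasiIso f ↔ (CochainComplex.mappingCone f).Acyclic := by
  rw [← HomotopyCategory.quotient_obj_mem_subcategoryAcyclic_iff_acyclic,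
    ← HomologicalComplex.mem_quasiIso_iff, ← HomotopyCategory.quotient_map_mem_quasiIso_iff,
    HomotopyCategory.quasiIso_eq_trW_subcategoryAcyclic]
  exact ObjectProperty.trW_iff_of_distinguished _ _
    (HomotopyCategory.mappingCone_triangleh_distinguished f)

universe u v

variable {A : Type u} [CommRing A]

theorem moduleCat_acyclic_iff_function_exact (C : CochainComplex (ModuleCat.{v} A) ℤ) :
    C.Acyclic ↔ ∀ i, Function.Exact (C.d i (i + 1)).hom (C.d (i + 1) (i + 1 + 1)).hom := by
  have hexactAt (i : ℤ) : C.ExactAt (i + 1) ↔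
      Function.Exact (C.d i (i + 1)).hom (C.d (i + 1) (i + 1 + 1)).hom := by
    rw [C.exactAt_iff' i (i + 1) (i + 1 + 1) (by simp) (by simp),
      ShortComplex.ShortExact.moduleCat_exact_iff_function_exact]
    rfl
  simp only [← hexactAt]
  exact ((Equiv.addRight (1 : ℤ)).forall_congr_right (q := C.ExactAt)).symm

theorem flat_range_d_of_acyclic {C : CochainComplex (ModuleCat.{v} A) ℤ}
    (hbdd : ∃ n : ℤ, ∀ i, n < i → Limits.IsZero (C.X i)) (hflat : ∀ i, Module.Flat A (C.X i))
    (hC : C.Acyclic) (i : ℤ) : Module.Flat A (C.d i (i + 1)).hom.range := by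
  obtain ⟨n, hn⟩ := hbdd
  have hstep (j : ℤ) (hj : Module.Flat A (C.d (j + 1) (j + 1 + 1)).hom.range) :
      Module.Flat A (C.d j (j + 1)).hom.range := by
    rw [← ((moduleCat_acyclic_iff_function_exact C).mp hC j).linearMap_ker_eq,
      ← LinearMap.ker_rangeRestrict]
    exact flat_left_of_exact (Submodule.injective_subtype _) (LinearMap.exact_subtype_ker_map _)
      (LinearMap.surjective_rangeRestrict _)
  have habove (j : ℤ) (hj : n ≤ j) : Module.Flat A (C.d j (j + 1)).hom.range := by
    have : Subsingleton (C.X (j + 1)) := ModuleCat.subsingleton_of_isZero (hn _ (by lia))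
    infer_instance
  rcases le_total n i with hi | hi
  · exact habove i hi
  · induction i, hi using Int.leInductionDown with
    | base => exact habove n le_rfl
    | pred j _ hj => exact hstep (j - 1) (by rwa [sub_add_cancel])

theorem flat_mappingCone_X {P Q : CochainComplex (ModuleCat.{v} A) ℤ}
    (hP : ∀ i, Module.Flat A (P.X i)) (hQ : ∀ i, Module.Flat A (Q.X i)) (f : P ⟶ Q) (i : ℤ) :
    Module.Flat A ((CochainComplex.mappingCone f).X i) := by
  have : Module.Flat A (P.X (i + 1) × Q.X i) := flat_prod
  exact Module.Flat.of_linearEquiv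
    (HomologicalComplex.homotopyCofiber.XIsoBiprod f i (i + 1) rfl ≪≫
      ModuleCat.biprodIsoProd _ _).toLinearEquiv

theorem exists_forall_isZero_mappingCone_X {C : Type*} [Category* C] [Preadditive C]
    [Limits.HasBinaryBiproducts C] {P Q : CochainComplex C ℤ}
    (hP : ∃ n : ℤ, ∀ i, n < i → Limits.IsZero (P.X i))
    (hQ : ∃ n : ℤ, ∀ i, n < i → Limits.IsZero (Q.X i)) (f : P ⟶ Q) :
    ∃ n : ℤ, ∀ i, n < i → Limits.IsZero ((CochainComplex.mappingCone f).X i) := by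
  obtain ⟨p, hp⟩ := hP
  obtain ⟨q, hq⟩ := hQ
  refine ⟨max p q, fun i hi ↦ (CochainComplex.mappingCone.isZero_X_iff f i).mpr ⟨hp _ ?_, hq _ ?_⟩⟩
    <;> lia

end Complexes

section AdicCompletionFunctor

variable {A : Type} [CommRing A] (I : Ideal A)

instance : (adicCompletionFunctor A I).Additive where
  map_add := ModuleCat.hom_ext <| LinearMap.ext fun x ↦ by
    obtain ⟨a, rfl⟩ := AdicCompletion.mk_surjective I _ x
    rfl

theorem acyclic_mapHomologicalComplex_adicCompletionFunctor
    {C : CochainComplex (ModuleCat A) ℤ} (hC : C.Acyclic)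
    (hflat : ∀ i, Module.Flat A (C.d i (i + 1)).hom.range) :
    (((adicCompletionFunctor A I).mapHomologicalComplex (ComplexShape.up ℤ)).obj C).Acyclic := by
  rw [moduleCat_acyclic_iff_function_exact] at hC ⊢
  exact fun i ↦ adicCompletion_map_exact_of_flat_range I (hC i) (hC (i + 1))

theorem stmt1_general (P Q : CochainComplex (ModuleCat A) ℤ)
    (hbddP : ∃ n : ℤ, ∀ i : ℤ, n < i → Limits.IsZero (P.X i))
    (hbddQ : ∃ n : ℤ, ∀ i : ℤ, n < i → Limits.IsZero (Q.X i))
    (hflatP : ∀ i : ℤ, Module.Flat A (P.X i))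
    (hflatQ : ∀ i : ℤ, Module.Flat A (Q.X i))
    (f : P ⟶ Q) [QuasiIso f] :
    QuasiIso (((adicCompletionFunctor A I).mapHomologicalComplex
      (ComplexShape.up ℤ)).map f) := by
  have hcone : (CochainComplex.mappingCone f).Acyclic :=
    (quasiIso_iff_acyclic_mappingCone f).mp inferInstance
  have hflat := flat_range_d_of_acyclic (exists_forall_isZero_mappingCone_X hbddP hbddQ f)
    (flat_mappingCone_X hflatP hflatQ f) hcone
  rw [quasiIso_iff_acyclic_mappingCone]
  exact fun i ↦ (acyclic_mapHomologicalComplex_adicCompletionFunctor I hcone hflat i).of_iso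
    (CochainComplex.mappingCone.mapHomologicalComplexIso f (adicCompletionFunctor A I))

end AdicCompletionFunctor

/-- If `f : P ⟶ Q` is a quasi-isomorphism between bounded-above cochain complexes of flat
modules over a noetherian commutative ring `A`, then the induced map between the degreewise
`I`-adic completions is again a quasi-isomorphism. -/
theorem stmt1 (A : Type) [CommRing A] [IsNoetherianRing A] (I : Ideal A)
    (P Q : CochainComplex (ModuleCat A) ℤ)
    (hbddP : ∃ n : ℤ, ∀ i : ℤ, n < i → Limits.IsZero (P.X i))
    (hbddQ : ∃ n : ℤ, ∀ i : ℤ, n < i → Limits.IsZero (Q.X i))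
    (hflatP : ∀ i : ℤ, Module.Flat A (P.X i))
    (hflatQ : ∀ i : ℤ, Module.Flat A (Q.X i))
    (f : P ⟶ Q) [QuasiIso f] :
    QuasiIso (((adicCompletionFunctor A I).mapHomologicalComplex
      (ComplexShape.up ℤ)).map f) :=
  stmt1_general I P Q hbddP hbddQ hflatP hflatQ f
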